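/- For positive definite matrices A and B, the Umegaki relative entropy satisfies D(A‖B) := Tr[A(log A - log B)] = ∫₁^∞ (1/γ) Tr[A({A > γB} - {B > γA})] dγ. -/

import Mathlib

open MeasureTheory Matrix
open scoped ComplexOrder
noncomputable section

/-- The positive part `(X)₊` of a Hermitian matrix, via continuous functional calculus. -/
def mposPart {n : ℕ} (X : Matrix (Fin n) (Fin n) ℂ) : Matrix (Fin n) (Fin n) ℂ :=
  cfc (fun x : ℝ => max x 0) X

/-- The spectral projection of a Hermitian matrix onto its strictly positive part,
so that `projPos (A - γ • B)` is the projection `{A > γB}`. -/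
def projPos {n : ℕ} (X : Matrix (Fin n) (Fin n) ℂ) : Matrix (Fin n) (Fin n) ℂ :=
  cfc (fun x : ℝ => if 0 < x then (1:ℝ) else 0) X

/-- The spectral projection of a Hermitian matrix onto its nonnegative part,
so that `projNonneg (γ • B - A)` is the projection `{A ≤ γB}`. -/
def projNonneg {n : ℕ} (X : Matrix (Fin n) (Fin n) ℂ) : Matrix (Fin n) (Fin n) ℂ :=
  cfc (fun x : ℝ => if 0 ≤ x then (1:ℝ) else 0) X

/-- Matrix logarithm via functional calculus. -/
def mlog {n : ℕ} (X : Matrix (Fin n) (Fin n) ℂ) : Matrix (Fin n) (Fin n) ℂ :=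
  cfc Real.log X

/-- Real matrix power via functional calculus (`Real.rpow`, so negative powers of
positive semidefinite matrices are taken on the support). -/
def mpow {n : ℕ} (X : Matrix (Fin n) (Fin n) ℂ) (a : ℝ) : Matrix (Fin n) (Fin n) ℂ :=
  cfc (fun x : ℝ => x ^ a) X

/-!
Write `(X)₊` for the positive part of `X`.

1. `γ ↦ Tr (A - γB)₊` is convex with subgradient `-Tr B{A > γB}`. Integrating by parts against this
   subgradient reduces the claim to Frenkel's formula
   `D(A‖B) = Tr (A - B) + ∫₁^∞ γ⁻¹ Tr (A - γB)₊ dγ + ∫₁^∞ γ⁻² Tr (B - γA)₊ dγ`.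
2. `(A + s) - γ(B + s) = (A - γB) - (γ - 1)s`, so by the layer-cake formula `Tr (A - γB)₊` is
   `γ - 1` times the integral over `s > 0` of the positive index of inertia of
   `(A + s) - γ(B + s)`.
3. By Sylvester's law this index counts the eigenvalues `> γ` of a matrix congruent to `A + s` by a
   congruence taking `B + s` to `1`. After exchanging the integrals, the inner integral over `γ` is
   explicit: it is the log-determinant divergence of `A + s` and `B + s`.
4. That divergence is `-d/ds D(A + s‖B + s)`, and `D(A + s‖B + s) → Tr (A - B)` as `s → ∞`, so its
   integral over `s > 0` is `D(A‖B) - Tr (A - B)`.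
-/

section HermitianPencil

variable {ι 𝕜 : Type*} [RCLike 𝕜] {A B X : Matrix ι ι 𝕜}

lemma isHermitian_sub_smul (hA : A.IsHermitian) (hB : B.IsHermitian) (r : ℝ) :
    (A - r • B).IsHermitian :=
  hA.sub (hB.smul (IsSelfAdjoint.all r))

variable [DecidableEq ι]

lemma isHermitian_add_smul_one (hX : X.IsHermitian) (s : ℝ) :
    (X + s • (1 : Matrix ι ι 𝕜)).IsHermitian :=
  hX.add (isHermitian_one.smul (IsSelfAdjoint.all s))

lemma posDef_add_smul_one (hX : X.PosDef) {s : ℝ} (hs : 0 ≤ s) :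
    (X + s • (1 : Matrix ι ι 𝕜)).PosDef :=
  hX.add_posSemidef (PosSemidef.one.smul hs)

end HermitianPencil

section SpectralCalculus

variable {ι 𝕜 : Type*} [Fintype ι] [RCLike 𝕜] {X Y : Matrix ι ι 𝕜}

open scoped MatrixOrder Matrix.Norms.L2Operator in
lemma trace_mul_nonneg (hX : X.PosSemidef) (hY : Y.PosSemidef) : 0 ≤ (X * Y).trace := by
  classical
  obtain ⟨S, rfl⟩ := CStarAlgebra.nonneg_iff_eq_star_mul_self.1 hX.nonneg
  rw [Matrix.mul_assoc, trace_mul_comm]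
  exact (hY.mul_mul_conjTranspose_same S).trace_nonneg

variable [DecidableEq ι]

open scoped MatrixOrder Matrix.Norms.L2Operator in
lemma exists_conjTranspose_mul_mul_eq_one (hX : X.PosDef) :
    ∃ T : Matrix ι ι 𝕜, Tᴴ * X * T = 1 := by
  obtain ⟨S, hS, rfl⟩ :=
    CStarAlgebra.isStrictlyPositive_iff_eq_star_mul_self.1 hX.isStrictlyPositive
  have hdet := S.isUnit_iff_isUnit_det.1 hS
  refine ⟨S⁻¹, ?_⟩
  rw [← Matrix.mul_assoc, Matrix.mul_assoc, mul_nonsing_inv S hdet, Matrix.mul_one,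
    star_eq_conjTranspose, ← conjTranspose_mul, mul_nonsing_inv S hdet, conjTranspose_one]

lemma continuousOn_spectrum_real (X : Matrix ι ι 𝕜) (f : ℝ → ℝ) :
    ContinuousOn f (spectrum ℝ X) :=
  finite_real_spectrum.continuousOn f

lemma cfc_cfc (hX : X.IsHermitian) (g f : ℝ → ℝ) : cfc g (cfc f X) = cfc (fun x ↦ g (f x)) X :=
  (cfc_comp' g f X ((finite_real_spectrum.image f).continuousOn g)
    (continuousOn_spectrum_real X f) hX.isSelfAdjoint).symm

lemma cfc_mul_cfc (X : Matrix ι ι 𝕜) (f g : ℝ → ℝ) :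
    cfc f X * cfc g X = cfc (fun x ↦ f x * g x) X :=
  (cfc_mul f g X (continuousOn_spectrum_real X f) (continuousOn_spectrum_real X g)).symm

lemma cfc_sub_cfc (X : Matrix ι ι 𝕜) (f g : ℝ → ℝ) :
    cfc f X - cfc g X = cfc (fun x ↦ f x - g x) X :=
  (cfc_sub f g X (continuousOn_spectrum_real X f) (continuousOn_spectrum_real X g)).symm

lemma add_smul_one_eq_cfc (hX : X.IsHermitian) (s : ℝ) :
    X + s • (1 : Matrix ι ι 𝕜) = cfc (fun x ↦ x + s) X := by
  rw [cfc_add_const s (fun x ↦ x) X continuousOn_id hX.isSelfAdjoint, cfc_id' ℝ X hX.isSelfAdjoint,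
    Algebra.algebraMap_eq_smul_one]

open scoped MatrixOrder in
lemma posSemidef_cfc {f : ℝ → ℝ} (hf : ∀ x, 0 ≤ f x) (X : Matrix ι ι 𝕜) :
    (cfc f X).PosSemidef :=
  nonneg_iff_posSemidef.1 (cfc_nonneg fun x _ ↦ hf x)

lemma re_trace_mul_cfc (hX : X.IsHermitian) (Y : Matrix ι ι 𝕜) (f : ℝ → ℝ) :
    RCLike.re (Y * cfc f X).trace = ∑ i, f (hX.eigenvalues i) *
      RCLike.re ((star (hX.eigenvectorUnitary : Matrix ι ι 𝕜) * Y *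
        (hX.eigenvectorUnitary : Matrix ι ι 𝕜)) i i) := by
  set U := (hX.eigenvectorUnitary : Matrix ι ι 𝕜)
  have h : (Y * cfc f X).trace =
      (diagonal (RCLike.ofReal ∘ f ∘ hX.eigenvalues) * (star U * Y * U)).trace := by
    rw [hX.cfc_eq, IsHermitian.cfc, Unitary.conjStarAlgAut_apply, trace_mul_comm, Matrix.mul_assoc,
      Matrix.mul_assoc, trace_mul_comm, Matrix.mul_assoc]
  rw [h, trace, map_sum]
  simp only [diag_apply, diagonal_mul, Function.comp_apply, RCLike.re_ofReal_mul]

lemma re_trace_cfc (hX : X.IsHermitian) (f : ℝ → ℝ) :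
    RCLike.re (cfc f X).trace = ∑ i, f (hX.eigenvalues i) := by
  simpa using re_trace_mul_cfc hX 1 f

end SpectralCalculus

section PositivePart

variable {n : ℕ} {X P : Matrix (Fin n) (Fin n) ℂ}

lemma posSemidef_projPos (X : Matrix (Fin n) (Fin n) ℂ) : (projPos X).PosSemidef :=
  posSemidef_cfc (fun x ↦ by split_ifs <;> simp) X

lemma posSemidef_one_sub_projPos (hX : X.IsHermitian) : (1 - projPos X).PosSemidef := by
  rw [projPos, ← cfc_const_one ℝ X hX.isSelfAdjoint, cfc_sub_cfc]
  exact posSemidef_cfc (fun x ↦ by split_ifs <;> simp) X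

lemma posSemidef_mposPart (X : Matrix (Fin n) (Fin n) ℂ) : (mposPart X).PosSemidef :=
  posSemidef_cfc (fun x ↦ le_max_right x 0) X

lemma mul_projPos (hX : X.IsHermitian) : X * projPos X = mposPart X := by
  nth_rw 1 [← cfc_id' ℝ X hX.isSelfAdjoint]
  rw [projPos, cfc_mul_cfc, mposPart]
  congr 1 with x
  rcases lt_or_ge 0 x with hx | hx
  · simp [hx, hx.le]
  · simp [hx, hx.not_gt]

lemma mposPart_sub_mposPart_neg (hX : X.IsHermitian) : mposPart X - mposPart (-X) = X := by
  have hneg : mposPart (-X) = cfc (fun x : ℝ ↦ max (-x) 0) X := by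
    rw [mposPart, ← cfc_comp_neg (fun x : ℝ ↦ max x 0) X
      ((finite_real_spectrum.image _).continuousOn _) hX.isSelfAdjoint]
  rw [mposPart, hneg, cfc_sub_cfc]
  simp only [max_zero_sub_max_neg_zero_eq_self]
  exact cfc_id' ℝ X hX.isSelfAdjoint

lemma re_trace_mul_le_re_trace_mposPart (hX : X.IsHermitian) (hP : P.PosSemidef)
    (hP' : (1 - P).PosSemidef) : (X * P).trace.re ≤ (mposPart X).trace.re := by
  have hpos : 0 ≤ (mposPart X * (1 - P)).trace.re :=
    (Complex.le_def.1 (trace_mul_nonneg (posSemidef_mposPart X) hP')).1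
  have hneg : 0 ≤ (mposPart (-X) * P).trace.re :=
    (Complex.le_def.1 (trace_mul_nonneg (posSemidef_mposPart (-X)) hP)).1
  nth_rw 1 [← mposPart_sub_mposPart_neg hX]
  simp only [mul_sub, sub_mul, Matrix.mul_one, trace_sub, Complex.sub_re] at hpos ⊢
  linarith

lemma re_trace_mposPart_add_le {D : Matrix (Fin n) (Fin n) ℂ} (hX : X.IsHermitian)
    (hD : D.IsHermitian) :
    (mposPart X).trace.re + (D * projPos X).trace.re ≤ (mposPart (X + D)).trace.re := by
  rw [← mul_projPos hX, ← Complex.add_re, ← trace_add, ← add_mul]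
  exact re_trace_mul_le_re_trace_mposPart (hX.add hD) (posSemidef_projPos X)
    (posSemidef_one_sub_projPos hX)

/-- The quantum hockey-stick function `E_γ(A‖B) = Tr (A - γB)₊`, without the normalization that
makes it a divergence for states. -/
def hockeyStick (A B : Matrix (Fin n) (Fin n) ℂ) (γ : ℝ) : ℝ :=
  (mposPart (A - γ • B)).trace.re

end PositivePart

section Inertia

lemma rank_le_rank_of_mulVec_eq_zero_imp {ι K : Type*} [Fintype ι] [Field K]
    {M N : Matrix ι ι K} (h : ∀ v, M *ᵥ v = 0 → N *ᵥ v = 0) : N.rank ≤ M.rank := by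
  have hker : LinearMap.ker M.mulVecLin ≤ LinearMap.ker N.mulVecLin := fun v hv ↦ h v hv
  have hle := Submodule.finrank_mono hker
  have hM := M.mulVecLin.finrank_range_add_finrank_ker
  have hN := N.mulVecLin.finrank_range_add_finrank_ker
  rw [rank, rank]
  omega

lemma rank_cfc {ι 𝕜 : Type*} [Fintype ι] [DecidableEq ι] [RCLike 𝕜] {X : Matrix ι ι 𝕜}
    (hX : X.IsHermitian) (f : ℝ → ℝ) :
    (cfc f X).rank = Fintype.card {i // f (hX.eigenvalues i) ≠ 0} := by
  have hU : IsUnit (hX.eigenvectorUnitary : Matrix ι ι 𝕜) := Unitary.isUnit_coe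
  rw [hX.cfc_eq, IsHermitian.cfc, Unitary.conjStarAlgAut_apply,
    rank_mul_eq_left_of_isUnit_det _ _ ((isUnit_iff_isUnit_det _).1 hU.star),
    rank_mul_eq_right_of_isUnit_det _ _ ((isUnit_iff_isUnit_det _).1 hU), rank_diagonal]
  simp

variable {n : ℕ} {X : Matrix (Fin n) (Fin n) ℂ}

/-- The positive index of inertia of a Hermitian matrix, i.e. the number of its positive
eigenvalues counted with multiplicity, encoded as the rank of its positive spectral projection. -/
def posIndex (X : Matrix (Fin n) (Fin n) ℂ) : ℕ := (projPos X).rank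

lemma posIndex_cfc (hX : X.IsHermitian) (f : ℝ → ℝ) :
    posIndex (cfc f X) = Fintype.card {i // 0 < f (hX.eigenvalues i)} := by
  rw [posIndex, projPos, cfc_cfc hX, rank_cfc hX]
  simp

lemma posIndex_eq_card_pos_eigenvalues (hX : X.IsHermitian) :
    posIndex X = Fintype.card {i // 0 < hX.eigenvalues i} := by
  rw [← posIndex_cfc hX fun x ↦ x, cfc_id' ℝ X hX.isSelfAdjoint]

lemma re_trace_projPos (hX : X.IsHermitian) : (projPos X).trace.re = posIndex X := by
  rw [posIndex_eq_card_pos_eigenvalues hX, Fintype.card_subtype, Finset.card_filter]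
  push_cast
  exact re_trace_cfc hX _

lemma projPos_eq_zero_of_posIndex (h : posIndex X = 0) : projPos X = 0 := by
  rw [posIndex, rank, Submodule.finrank_eq_zero, LinearMap.range_eq_bot] at h
  exact toLin'.map_eq_zero_iff.1 h

lemma projPos_mul_mposPart (X : Matrix (Fin n) (Fin n) ℂ) :
    projPos X * mposPart X = mposPart X := by
  rw [projPos, mposPart, cfc_mul_cfc]
  congr 1 with x
  rcases lt_or_ge 0 x with hx | hx <;> simp [hx]

lemma projPos_mulVec_eq_zero_of_mposPart {v : Fin n → ℂ} (h : mposPart X *ᵥ v = 0) :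
    projPos X *ᵥ v = 0 := by
  have hinv : cfc (fun x : ℝ ↦ x⁻¹) X * mposPart X = projPos X := by
    rw [mposPart, cfc_mul_cfc, projPos]
    congr 1 with x
    rcases lt_or_ge 0 x with hx | hx
    · simp [hx, hx.le, hx.ne']
    · simp [hx, hx.not_gt]
  rw [← hinv, ← mulVec_mulVec, h, mulVec_zero]

lemma star_dotProduct_mulVec_nonpos {w : Fin n → ℂ} (hX : X.IsHermitian)
    (hw : projPos X *ᵥ w = 0) : star w ⬝ᵥ X *ᵥ w ≤ 0 := by
  have hpos : mposPart X *ᵥ w = 0 := by rw [← mul_projPos hX, ← mulVec_mulVec, hw, mulVec_zero]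
  have hneg := (posSemidef_mposPart (-X)).dotProduct_mulVec_nonneg w
  rw [← mposPart_sub_mposPart_neg hX, sub_mulVec, hpos, zero_sub, dotProduct_neg]
  exact neg_nonpos.2 hneg

lemma posIndex_conjTranspose_mul_mul_le (hX : X.IsHermitian) (S : Matrix (Fin n) (Fin n) ℂ) :
    posIndex (Sᴴ * X * S) ≤ posIndex X := by
  set Y := Sᴴ * X * S with hYdef
  have hY : Y.IsHermitian := isHermitian_conjTranspose_mul_mul S hX
  have hPYP : (projPos Y)ᴴ * Y * projPos Y = mposPart Y := by
    rw [(posSemidef_projPos Y).1, Matrix.mul_assoc, mul_projPos hY, projPos_mul_mposPart]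
  calc (projPos Y).rank ≤ (projPos X * (S * projPos Y)).rank := ?_
    _ ≤ (projPos X).rank := rank_mul_le_left _ _
  refine rank_le_rank_of_mulVec_eq_zero_imp fun v hv ↦ ?_
  have hform : star v ⬝ᵥ mposPart Y *ᵥ v ≤ 0 := by
    have := star_dotProduct_mulVec_nonpos hX (w := (S * projPos Y) *ᵥ v) (by rwa [mulVec_mulVec])
    rwa [star_mulVec, ← dotProduct_mulVec, mulVec_mulVec, mulVec_mulVec, conjTranspose_mul,
      ← Matrix.mul_assoc, Matrix.mul_assoc _ Sᴴ, Matrix.mul_assoc _ (Sᴴ * X), ← hYdef,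
      hPYP] at this
  have hpsd := posSemidef_mposPart Y
  exact projPos_mulVec_eq_zero_of_mposPart <| (hpsd.dotProduct_mulVec_zero_iff v).1 <|
    le_antisymm hform (hpsd.dotProduct_mulVec_nonneg v)

lemma posIndex_conjTranspose_mul_mul (hX : X.IsHermitian) {S : Matrix (Fin n) (Fin n) ℂ}
    (hS : IsUnit S) : posIndex (Sᴴ * X * S) = posIndex X := by
  refine (posIndex_conjTranspose_mul_mul_le hX S).antisymm ?_
  have hdet := S.isUnit_iff_isUnit_det.1 hS
  have hinv : S⁻¹ᴴ * (Sᴴ * X * S) * S⁻¹ = X := by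
    rw [Matrix.mul_assoc, Matrix.mul_assoc, mul_nonsing_inv S hdet, Matrix.mul_one,
      ← Matrix.mul_assoc, ← conjTranspose_mul, mul_nonsing_inv S hdet, conjTranspose_one,
      Matrix.one_mul]
  simpa only [hinv] using posIndex_conjTranspose_mul_mul_le
    (isHermitian_conjTranspose_mul_mul S hX) S⁻¹

end Inertia

section LogDetDivergence

variable {ι 𝕜 : Type*} [Fintype ι] [DecidableEq ι] [RCLike 𝕜] {A B T X : Matrix ι ι 𝕜}

/-- The log-determinant divergence (Stein loss) `Tr[A B⁻¹] - dim - log det (A B⁻¹)` of two positive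
definite matrices, with the last term split as `log det A - log det B`. -/
def logDetDiv (A B : Matrix ι ι 𝕜) : ℝ :=
  RCLike.re (A * B⁻¹).trace - Fintype.card ι - Real.log (RCLike.re A.det) +
    Real.log (RCLike.re B.det)

lemma log_re_det (hX : X.PosDef) :
    Real.log (RCLike.re X.det) = ∑ i, Real.log (hX.1.eigenvalues i) := by
  rw [hX.1.det_eq_prod_eigenvalues, ← RCLike.ofReal_prod, RCLike.ofReal_re,
    Real.log_prod fun i _ ↦ (hX.eigenvalues_pos i).ne']

lemma isUnit_of_conjTranspose_mul_mul_eq_one (hT : Tᴴ * B * T = 1) : IsUnit T :=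
  IsUnit.of_mul_eq_one_right _ hT

lemma posDef_conjTranspose_mul_mul (hA : A.PosDef) (hT : Tᴴ * B * T = 1) : (Tᴴ * A * T).PosDef :=
  hA.conjTranspose_mul_mul_same
    (mulVec_injective_of_isUnit (isUnit_of_conjTranspose_mul_mul_eq_one hT))

lemma inv_eq_mul_conjTranspose (hT : Tᴴ * B * T = 1) : B⁻¹ = T * Tᴴ :=
  inv_eq_left_inv <| by rw [Matrix.mul_assoc, mul_eq_one_comm.1 hT]

lemma det_conjTranspose_mul_mul_mul_det (A : Matrix ι ι 𝕜) (hT : Tᴴ * B * T = 1) :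
    (Tᴴ * A * T).det * B.det = A.det := by
  have hdet := congrArg det hT
  simp only [det_mul, det_one] at hdet ⊢
  linear_combination A.det * hdet

lemma logDetDiv_eq_sum (hA : A.PosDef) (hB : B.PosDef) (hT : Tᴴ * B * T = 1) :
    logDetDiv A B =
      ∑ i, ((isHermitian_conjTranspose_mul_mul T hA.1).eigenvalues i - 1 -
        Real.log ((isHermitian_conjTranspose_mul_mul T hA.1).eigenvalues i)) := by
  set hM := isHermitian_conjTranspose_mul_mul T hA.1
  have hMpos := posDef_conjTranspose_mul_mul hA hT
  have htrace : RCLike.re (A * B⁻¹).trace = ∑ i, hM.eigenvalues i := by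
    rw [inv_eq_mul_conjTranspose hT, ← Matrix.mul_assoc, trace_mul_comm, ← Matrix.mul_assoc,
      hM.trace_eq_sum_eigenvalues, map_sum]
    simp only [RCLike.ofReal_re]
  have hlogdet : Real.log (RCLike.re A.det) =
      ∑ i, Real.log (hM.eigenvalues i) + Real.log (RCLike.re B.det) := by
    have hdetM := RCLike.pos_iff.1 hMpos.det_pos
    have hdetB := RCLike.pos_iff.1 hB.det_pos
    rw [← log_re_det hMpos, ← Real.log_mul hdetM.1.ne' hdetB.1.ne',
      ← det_conjTranspose_mul_mul_mul_det A hT, RCLike.mul_re, hdetB.2, mul_zero, sub_zero]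
  rw [logDetDiv, htrace, hlogdet, Finset.sum_sub_distrib, Finset.sum_sub_distrib]
  simp only [Finset.sum_const, Finset.card_univ, nsmul_eq_mul, mul_one]
  ring

lemma logDetDiv_nonneg (hA : A.PosDef) (hB : B.PosDef) : 0 ≤ logDetDiv A B := by
  obtain ⟨T, hT⟩ := exists_conjTranspose_mul_mul_eq_one hB
  rw [logDetDiv_eq_sum hA hB hT]
  have hMpos := posDef_conjTranspose_mul_mul hA hT
  refine Finset.sum_nonneg fun i _ ↦ ?_
  linarith [Real.log_le_sub_one_of_pos (hMpos.eigenvalues_pos i)]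

lemma posIndex_smul_add_smul {n : ℕ} {A B T : Matrix (Fin n) (Fin n) ℂ} (hA : A.IsHermitian)
    (hB : B.IsHermitian) (hT : Tᴴ * B * T = 1) (a b : ℝ) :
    posIndex (a • A + b • B) = Fintype.card
      {i // 0 < a * (isHermitian_conjTranspose_mul_mul T hA).eigenvalues i + b} := by
  have hM := isHermitian_conjTranspose_mul_mul T hA
  have hcongr : Tᴴ * (a • A + b • B) * T = cfc (fun x ↦ a * x + b) (Tᴴ * A * T) := by
    rw [cfc_add_const b (fun x ↦ a * x) _ (continuousOn_spectrum_real _ _) hM.isSelfAdjoint,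
      cfc_const_mul a (fun x ↦ x) _ (continuousOn_spectrum_real _ _),
      cfc_id' ℝ _ hM.isSelfAdjoint, Algebra.algebraMap_eq_smul_one, ← hT]
    simp only [mul_add, add_mul, mul_smul_comm, smul_mul_assoc]
  rw [← posIndex_cfc hM fun x ↦ a * x + b, ← hcongr, posIndex_conjTranspose_mul_mul
    ((hA.smul (IsSelfAdjoint.all a)).add (hB.smul (IsSelfAdjoint.all b)))
    (isUnit_of_conjTranspose_mul_mul_eq_one hT)]

end LogDetDivergence

section RelativeEntropy

lemma tendsto_add_mul_log_add_sub_log (b c : ℝ) :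
    Filter.Tendsto (fun s ↦ (c + s) * (Real.log (b + s) - Real.log s)) Filter.atTop (nhds b) := by
  have hlim : Filter.Tendsto (fun s ↦ (c / s + 1) * (s * Real.log (1 + b / s))) Filter.atTop
      (nhds ((0 + 1) * b)) :=
    ((Filter.tendsto_id.const_div_atTop c).add_const 1).mul
      (Real.tendsto_mul_log_one_add_div_atTop b)
  rw [zero_add, one_mul] at hlim
  refine hlim.congr' ?_
  filter_upwards [Filter.eventually_gt_atTop 0, Filter.eventually_gt_atTop (-b)] with s hs hbs
  have hdiv : 1 + b / s = (b + s) / s := by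
    field_simp
    ring
  rw [hdiv, Real.log_div (neg_lt_iff_pos_add'.1 hbs).ne' hs.ne']
  field_simp

variable {ι 𝕜 : Type*} [Fintype ι] [DecidableEq ι] [RCLike 𝕜] {A B X : Matrix ι ι 𝕜}

/-- The Umegaki relative entropy `D(A‖B) = Tr[A (log A - log B)]`, with the logarithms taken by
functional calculus. -/
def relEntropy (A B : Matrix ι ι 𝕜) : ℝ :=
  RCLike.re (A * (cfc Real.log A - cfc Real.log B)).trace

lemma relEntropy_eq_sub (A B : Matrix ι ι 𝕜) :
    relEntropy A B =
      RCLike.re (A * cfc Real.log A).trace - RCLike.re (A * cfc Real.log B).trace := by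
  rw [relEntropy, mul_sub, trace_sub, map_sub]

lemma inv_eq_cfc_inv (hX : X.PosDef) : X⁻¹ = cfc (fun x : ℝ ↦ x⁻¹) X := by
  have hcancel : Set.EqOn (fun x : ℝ ↦ x⁻¹ * x) (fun _ ↦ 1) (spectrum ℝ X) := by
    rw [hX.1.spectrum_real_eq_range_eigenvalues]
    rintro _ ⟨i, rfl⟩
    exact inv_mul_cancel₀ (hX.eigenvalues_pos i).ne'
  refine inv_eq_left_inv ?_
  nth_rw 2 [← cfc_id' ℝ X hX.1.isSelfAdjoint]
  rw [cfc_mul_cfc, cfc_congr hcancel, cfc_const_one ℝ X hX.1.isSelfAdjoint]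

lemma log_re_det_eq_re_trace_cfc_log (hX : X.PosDef) :
    Real.log (RCLike.re X.det) = RCLike.re (cfc Real.log X).trace := by
  rw [log_re_det hX, re_trace_cfc hX.1]

lemma re_trace_add_smul_one_mul_cfc (hX : X.IsHermitian) (Y : Matrix ι ι 𝕜) (f : ℝ → ℝ) (s : ℝ) :
    RCLike.re ((Y + s • 1) * cfc f (X + s • 1)).trace = ∑ i, (RCLike.re
      ((star (hX.eigenvectorUnitary : Matrix ι ι 𝕜) * Y *
        (hX.eigenvectorUnitary : Matrix ι ι 𝕜)) i i) + s) * f (hX.eigenvalues i + s) := by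
  rw [add_smul_one_eq_cfc hX, cfc_cfc hX, re_trace_mul_cfc hX]
  refine Finset.sum_congr rfl fun i _ ↦ ?_
  have hU := Unitary.coe_star_mul_self hX.eigenvectorUnitary
  simp only [mul_add, add_mul, mul_smul_comm, smul_mul_assoc, Matrix.mul_one, hU, Matrix.add_apply,
    Matrix.smul_apply, one_apply_eq, map_add, RCLike.smul_re, RCLike.one_re]
  ring

lemma re_trace_cfc_add_smul_one (hX : X.IsHermitian) (f : ℝ → ℝ) (s : ℝ) :
    RCLike.re (cfc f (X + s • (1 : Matrix ι ι 𝕜))).trace = ∑ i, f (hX.eigenvalues i + s) := by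
  rw [add_smul_one_eq_cfc hX, cfc_cfc hX, re_trace_cfc hX]

lemma hasDerivAt_re_trace_mul_log_add_smul_one (A : Matrix ι ι 𝕜) (hB : B.PosDef) {s : ℝ}
    (hs : 0 ≤ s) :
    HasDerivAt (fun t : ℝ ↦ RCLike.re ((A + t • 1) * cfc Real.log (B + t • 1)).trace)
      (RCLike.re ((A + s • 1) * (B + s • 1)⁻¹).trace +
        Real.log (RCLike.re (B + s • (1 : Matrix ι ι 𝕜)).det)) s := by
  have hBs := posDef_add_smul_one hB hs
  rw [log_re_det_eq_re_trace_cfc_log hBs, inv_eq_cfc_inv hBs]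
  simp only [re_trace_add_smul_one_mul_cfc hB.1, re_trace_cfc_add_smul_one hB.1,
    ← Finset.sum_add_distrib]
  refine HasDerivAt.fun_sum fun i _ ↦ ?_
  have hpos : hB.1.eigenvalues i + s ≠ 0 := (add_pos_of_pos_of_nonneg (hB.eigenvalues_pos i) hs).ne'
  refine (((hasDerivAt_id' s).const_add _).fun_mul
    (((hasDerivAt_id' s).const_add (hB.1.eigenvalues i)).log hpos)).congr_deriv ?_
  rw [one_mul, one_div, add_comm]

lemma tendsto_re_trace_mul_log_add_smul_one (A : Matrix ι ι 𝕜) (hB : B.IsHermitian) :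
    Filter.Tendsto (fun s : ℝ ↦ RCLike.re ((A + s • 1) * cfc Real.log (B + s • 1)).trace -
      Real.log s * RCLike.re (A + s • (1 : Matrix ι ι 𝕜)).trace) Filter.atTop
      (nhds (RCLike.re B.trace)) := by
  have htraceA (s : ℝ) : RCLike.re (A + s • (1 : Matrix ι ι 𝕜)).trace = ∑ i, (RCLike.re
      ((star (hB.eigenvectorUnitary : Matrix ι ι 𝕜) * A *
        (hB.eigenvectorUnitary : Matrix ι ι 𝕜)) i i) + s) := by
    simpa [cfc_const_one ℝ _ (isHermitian_add_smul_one hB s).isSelfAdjoint] using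
      re_trace_add_smul_one_mul_cfc hB A (fun _ ↦ 1) s
  have htraceB : RCLike.re B.trace = ∑ i, hB.eigenvalues i := by
    rw [← re_trace_cfc hB fun x ↦ x, cfc_id' ℝ B hB.isSelfAdjoint]
  simp only [re_trace_add_smul_one_mul_cfc hB, htraceA, Finset.mul_sum, ← Finset.sum_sub_distrib]
  rw [htraceB]
  exact tendsto_finsetSum _ fun i _ ↦ (tendsto_add_mul_log_add_sub_log (hB.eigenvalues i) _).congr
    fun s ↦ by ring

lemma hasDerivAt_relEntropy_add_smul_one (hA : A.PosDef) (hB : B.PosDef) {s : ℝ} (hs : 0 ≤ s) :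
    HasDerivAt (fun t : ℝ ↦ relEntropy (A + t • 1) (B + t • 1))
      (-logDetDiv (A + s • 1) (B + s • 1)) s := by
  have hinv : (A + s • 1) * (A + s • 1)⁻¹ = 1 :=
    mul_nonsing_inv _ ((isUnit_iff_isUnit_det _).1 (posDef_add_smul_one hA hs).isUnit)
  simp only [relEntropy_eq_sub]
  refine ((hasDerivAt_re_trace_mul_log_add_smul_one A hA hs).fun_sub
    (hasDerivAt_re_trace_mul_log_add_smul_one A hB hs)).congr_deriv ?_
  rw [hinv, trace_one, RCLike.natCast_re, logDetDiv]
  ring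

lemma tendsto_relEntropy_add_smul_one (hA : A.IsHermitian) (hB : B.IsHermitian) :
    Filter.Tendsto (fun s : ℝ ↦ relEntropy (A + s • 1) (B + s • 1)) Filter.atTop
      (nhds (RCLike.re (A - B).trace)) := by
  rw [trace_sub, map_sub]
  refine ((tendsto_re_trace_mul_log_add_smul_one A hA).sub
    (tendsto_re_trace_mul_log_add_smul_one A hB)).congr fun s ↦ ?_
  rw [relEntropy_eq_sub, sub_sub_sub_cancel_right]

lemma logDetDiv_add_smul_one_nonneg (hA : A.PosDef) (hB : B.PosDef) :
    ∀ s ∈ Set.Ioi (0 : ℝ), 0 ≤ logDetDiv (A + s • 1) (B + s • 1) := fun _ hs ↦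
  logDetDiv_nonneg (posDef_add_smul_one hA (le_of_lt hs)) (posDef_add_smul_one hB (le_of_lt hs))

lemma integral_logDetDiv_add_smul_one (hA : A.PosDef) (hB : B.PosDef) :
    IntegrableOn (fun s : ℝ ↦ logDetDiv (A + s • 1) (B + s • 1)) (Set.Ioi 0) ∧
      ∫ s in Set.Ioi (0 : ℝ), logDetDiv (A + s • 1) (B + s • 1) =
        relEntropy A B - RCLike.re (A - B).trace := by
  have hderiv : ∀ s ∈ Set.Ici (0 : ℝ), HasDerivAt
      (fun t : ℝ ↦ -relEntropy (A + t • 1) (B + t • 1))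
      (logDetDiv (A + s • 1) (B + s • 1)) s := fun s hs ↦ by
    simpa only [neg_neg] using (hasDerivAt_relEntropy_add_smul_one hA hB hs).fun_neg
  have hnonneg := logDetDiv_add_smul_one_nonneg hA hB
  have hlim := (tendsto_relEntropy_add_smul_one hA.1 hB.1).neg
  refine ⟨integrableOn_Ioi_deriv_of_nonneg' hderiv hnonneg hlim, ?_⟩
  rw [integral_Ioi_of_hasDerivAt_of_nonneg' hderiv hnonneg hlim]
  simp only [zero_smul, add_zero]
  ring

lemma re_trace_sub_le_relEntropy (hA : A.PosDef) (hB : B.PosDef) :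
    RCLike.re (A - B).trace ≤ relEntropy A B :=
  sub_nonneg.1 <| (integral_logDetDiv_add_smul_one hA hB).2 ▸
    setIntegral_nonneg measurableSet_Ioi (logDetDiv_add_smul_one_nonneg hA hB)

end RelativeEntropy

section Subgradient

variable {f g : ℝ → ℝ}

lemma monotone_of_subgradient (h : ∀ x y, f x + g x * (y - x) ≤ f y) : Monotone g := by
  intro x y hxy
  rcases hxy.eq_or_lt with rfl | hlt
  · rfl
  · nlinarith [h x y, h y x]

lemma convexOn_of_subgradient (h : ∀ x y, f x + g x * (y - x) ≤ f y) :
    ConvexOn ℝ Set.univ f := by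
  refine ⟨convex_univ, fun x _ y _ a b ha hb hab ↦ ?_⟩
  simp only [smul_eq_mul]
  set z := a * x + b * y with hz
  have hx := mul_le_mul_of_nonneg_left (h z x) ha
  have hy := mul_le_mul_of_nonneg_left (h z y) hb
  have hsum : a * (f z + g z * (x - z)) + b * (f z + g z * (y - z)) = f z := by
    linear_combination (f z - g z * z) * hab - g z * hz
  linarith

lemma continuous_of_subgradient (h : ∀ x y, f x + g x * (y - x) ≤ f y) : Continuous f :=
  continuousOn_univ.1 <| (convexOn_of_subgradient h).continuousOn isOpen_univ

lemma hasDerivAt_of_subgradient (h : ∀ x y, f x + g x * (y - x) ≤ f y) {x : ℝ}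
    (hg : ContinuousAt g x) : HasDerivAt f (g x) x := by
  rw [hasDerivAt_iff_isLittleO]
  have hsmall : (fun y ↦ (g y - g x) * (y - x)) =o[nhds x] fun y ↦ y - x := by
    simpa using ((Asymptotics.isLittleO_one_iff ℝ).2
      (tendsto_sub_nhds_zero_iff.2 hg)).mul_isBigO (Asymptotics.isBigO_refl (fun y ↦ y - x) _)
  refine (Asymptotics.IsBigO.of_bound 1 (.of_forall fun y ↦ ?_)).trans_isLittleO hsmall
  have hlower := h x y
  have hupper := h y x
  rw [smul_eq_mul, one_mul, Real.norm_of_nonneg (by linarith), Real.norm_eq_abs]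
  exact (by linarith : _ ≤ (g y - g x) * (y - x)).trans (le_abs_self _)

lemma intervalIntegrable_mul_add_mul_of_subgradient (h : ∀ x y, f x + g x * (y - x) ≤ f y)
    {k k' : ℝ → ℝ} {a b : ℝ} (hk : ContinuousOn k (Set.uIcc a b))
    (hk' : ContinuousOn k' (Set.uIcc a b)) :
    IntervalIntegrable (fun x ↦ k x * g x + k' x * f x) volume a b :=
  ((monotone_of_subgradient h).intervalIntegrable.continuousOn_mul hk).add
    (hk'.mul (continuous_of_subgradient h).continuousOn).intervalIntegrable

lemma intervalIntegral_mul_add_mul_of_subgradient (h : ∀ x y, f x + g x * (y - x) ≤ f y)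
    {k k' : ℝ → ℝ} {a b : ℝ} (hab : a ≤ b) (hk : ∀ x ∈ Set.Icc a b, HasDerivAt k (k' x) x)
    (hk' : ContinuousOn k' (Set.Icc a b)) :
    ∫ x in a..b, (k x * g x + k' x * f x) = k b * f b - k a * f a := by
  have hkc : ContinuousOn k (Set.Icc a b) := fun x hx ↦ (hk x hx).continuousAt.continuousWithinAt
  refine integral_eq_of_hasDerivAt_off_countable_of_le (fun x ↦ k x * f x) _ hab
    (monotone_of_subgradient h).countable_not_continuousAt
    (hkc.mul (continuous_of_subgradient h).continuousOn) (fun x hx ↦ ?_)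
    (intervalIntegrable_mul_add_mul_of_subgradient h (by rwa [Set.uIcc_of_le hab])
      (by rwa [Set.uIcc_of_le hab]))
  have hg : ContinuousAt g x := not_not.1 hx.2
  simpa only [add_comm] using (hk x (Set.Ioo_subset_Icc_self hx.1)).fun_mul
    (hasDerivAt_of_subgradient h hg)

lemma integral_Ioi_mul_add_mul_of_subgradient (h : ∀ x y, f x + g x * (y - x) ≤ f y)
    {k k' : ℝ → ℝ} {a : ℝ} (hk : ∀ x ∈ Set.Ici a, HasDerivAt k (k' x) x)
    (hk' : ContinuousOn k' (Set.Ici a)) (hf0 : ∀ᶠ x in Filter.atTop, f x = 0)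
    (hg0 : ∀ᶠ x in Filter.atTop, g x = 0) :
    IntegrableOn (fun x ↦ k x * g x + k' x * f x) (Set.Ioi a) ∧
      ∫ x in Set.Ioi a, (k x * g x + k' x * f x) = -(k a * f a) := by
  obtain ⟨b, hb⟩ := Filter.eventually_atTop.1
    ((hf0.and hg0).and (Filter.eventually_ge_atTop a))
  have hab : a ≤ b := (hb b le_rfl).2
  have hvanish : ∀ x ∈ Set.Ioi a \ Set.Ioc a b, k x * g x + k' x * f x = 0 := by
    intro x hx
    have hbx : b ≤ x := le_of_not_ge fun hxb ↦ hx.2 ⟨hx.1, hxb⟩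
    rw [(hb x hbx).1.1, (hb x hbx).1.2, mul_zero, mul_zero, add_zero]
  have hk'_Icc := hk'.mono (Set.Icc_subset_Ici_self : Set.Icc a b ⊆ Set.Ici a)
  have hk_Icc : ∀ x ∈ Set.Icc a b, HasDerivAt k (k' x) x := fun x hx ↦ hk x hx.1
  constructor
  · refine IntegrableOn.of_forall_sdiff_eq_zero (s := Set.Ioc a b) ?_ measurableSet_Ioi hvanish
    rw [← intervalIntegrable_iff_integrableOn_Ioc_of_le hab]
    refine intervalIntegrable_mul_add_mul_of_subgradient h ?_ ?_ <;> rw [Set.uIcc_of_le hab]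
    · exact fun x hx ↦ (hk_Icc x hx).continuousAt.continuousWithinAt
    · exact hk'_Icc
  · rw [setIntegral_eq_of_subset_of_forall_sdiff_eq_zero measurableSet_Ioi
      Set.Ioc_subset_Ioi_self hvanish, ← intervalIntegral.integral_of_le hab,
      intervalIntegral_mul_add_mul_of_subgradient h hab hk_Icc hk'_Icc, (hb b le_rfl).1.1]
    ring

end Subgradient

section LayerCake

open scoped Matrix.Norms.L2Operator in
lemma continuous_cfc {α ι : Type*} [TopologicalSpace α] [Fintype ι] [DecidableEq ι]
    {X : α → Matrix ι ι ℂ} (hX : Continuous X) (hXh : ∀ a, (X a).IsHermitian) {f : ℝ → ℝ}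
    (hf : Continuous f) : Continuous fun a ↦ cfc f (X a) := by
  refine Continuous.cfc (s := fun a ↦ Metric.closedBall 0 ((‖X a‖ + 1) * ‖(1 : Matrix ι ι ℂ)‖)) f hX
    (fun a ↦ isCompact_closedBall _ _) (fun a ↦ ?_) (fun a ↦ hf.continuousOn) hXh
  filter_upwards [(hX.norm.tendsto a).eventually (gt_mem_nhds (lt_add_one ‖X a‖))] with b hb
  refine (spectrum.subset_closedBall_norm_mul (𝕜 := ℝ) (X b)).trans ?_
  gcongr

lemma tendsto_min_one_mul_posPart (x : ℝ) :
    Filter.Tendsto (fun k : ℕ ↦ min 1 (k * max x 0)) Filter.atTop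
      (nhds (if 0 < x then 1 else 0)) := by
  split_ifs with hx
  · have hlim : Filter.Tendsto (fun k : ℕ ↦ (k : ℝ) * max x 0) Filter.atTop Filter.atTop :=
      tendsto_natCast_atTop_atTop.atTop_mul_const (lt_max_of_lt_left hx)
    refine tendsto_const_nhds.congr' ?_
    filter_upwards [hlim.eventually_ge_atTop 1] with k hk
    rw [min_eq_left hk]
  · simp [max_eq_right (not_lt.1 hx)]

variable {n : ℕ} {X : Matrix (Fin n) (Fin n) ℂ}

lemma continuous_re_trace_mposPart {α : Type*} [TopologicalSpace α]
    {X : α → Matrix (Fin n) (Fin n) ℂ} (hX : Continuous X) (hXh : ∀ a, (X a).IsHermitian) :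
    Continuous fun a ↦ (mposPart (X a)).trace.re :=
  Complex.continuous_re.comp
    (continuous_cfc hX hXh (by fun_prop : Continuous fun x : ℝ ↦ max x 0)).matrix_trace

lemma measurable_posIndex {α : Type*} [TopologicalSpace α] [MeasurableSpace α]
    [OpensMeasurableSpace α] {X : α → Matrix (Fin n) (Fin n) ℂ} (hX : Continuous X)
    (hXh : ∀ a, (X a).IsHermitian) : Measurable fun a ↦ posIndex (X a) := by
  suffices h : Measurable fun a ↦ (posIndex (X a) : ℝ) by
    simpa only [Function.comp_def, Nat.floor_natCast] using Nat.measurable_floor.comp h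
  refine measurable_of_tendsto_metrizable
    (f := fun (k : ℕ) a ↦ (cfc (fun x : ℝ ↦ min 1 (k * max x 0)) (X a)).trace.re)
    (fun k ↦ (Complex.continuous_re.comp
      (continuous_cfc hX hXh (by fun_prop)).matrix_trace).measurable)
    (tendsto_pi_nhds.2 fun a ↦ ?_)
  simp only [← re_trace_projPos (hXh a), projPos, ← RCLike.re_eq_complex_re, re_trace_cfc (hXh a)]
  exact tendsto_finsetSum _ fun i _ ↦ tendsto_min_one_mul_posPart _

lemma lintegral_Ioi_mul_card_lt {ι : Type*} [Fintype ι] {w : ℝ → ENNReal} (hw : Measurable w)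
    (a : ℝ) (b : ι → ℝ) :
    ∫⁻ r in Set.Ioi a, w r * Fintype.card {i // r < b i} = ∑ i, ∫⁻ r in Set.Ioo a (b i), w r := by
  have hcount : ∀ r, w r * Fintype.card {i // r < b i} =
      ∑ i, (Set.Iio (b i)).indicator w r := fun r ↦ by
    rw [Fintype.card_subtype, Finset.card_filter, Nat.cast_sum, Finset.mul_sum]
    refine Finset.sum_congr rfl fun i _ ↦ ?_
    by_cases h : r < b i <;> simp [h]
  simp_rw [hcount]
  rw [lintegral_finsetSum _ fun i _ ↦ hw.indicator measurableSet_Iio]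
  refine Finset.sum_congr rfl fun i _ ↦ ?_
  rw [lintegral_indicator measurableSet_Iio, Measure.restrict_restrict measurableSet_Iio,
    Set.inter_comm, Set.Ioi_inter_Iio]

lemma lintegral_posIndex_sub_smul_one (hX : X.IsHermitian) {c : ℝ} (hc : 0 < c) :
    ∫⁻ s in Set.Ioi 0, ENNReal.ofReal c * posIndex (X - (c * s) • 1) =
      ENNReal.ofReal (mposPart X).trace.re := by
  have hindex : ∀ s : ℝ, posIndex (X - (c * s) • 1) =
      Fintype.card {i // s < hX.eigenvalues i / c} := fun s ↦ by
    rw [sub_eq_add_neg, ← neg_smul, add_smul_one_eq_cfc hX, posIndex_cfc hX]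
    simp only [← sub_eq_add_neg, sub_pos, lt_div_iff₀' hc]
  simp_rw [hindex]
  rw [lintegral_Ioi_mul_card_lt measurable_const, mposPart, ← RCLike.re_eq_complex_re,
    re_trace_cfc hX, ENNReal.ofReal_sum_of_nonneg fun i _ ↦ le_max_right _ _]
  refine Finset.sum_congr rfl fun i _ ↦ ?_
  rw [setLIntegral_const, Real.volume_Ioo, sub_zero, ← ENNReal.ofReal_mul hc.le,
    mul_div_cancel₀ _ hc.ne', ENNReal.ofReal_max, ENNReal.ofReal_zero,
    max_eq_left zero_le]

end LayerCake

section InertiaIntegrals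

lemma setLIntegral_Ioo_ofReal_of_hasDerivAt {F w : ℝ → ℝ} {a b : ℝ} (hab : a ≤ b)
    (hF : ∀ x ∈ Set.Icc a b, HasDerivAt F (w x) x) (hw : ∀ x ∈ Set.Ioo a b, 0 ≤ w x) :
    ∫⁻ x in Set.Ioo a b, ENNReal.ofReal (w x) = ENNReal.ofReal (F b - F a) := by
  have hint : IntegrableOn w (Set.Ioc a b) :=
    intervalIntegral.integrableOn_deriv_of_nonneg
      (fun x hx ↦ (hF x hx).continuousAt.continuousWithinAt)
      (fun x hx ↦ hF x (Set.Ioo_subset_Icc_self hx)) hw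
  rw [← ofReal_integral_eq_lintegral_ofReal (hint.mono_set Set.Ioo_subset_Ioc_self)
      (ae_restrict_of_forall_mem measurableSet_Ioo hw),
    ← integral_Ioc_eq_integral_Ioo, ← intervalIntegral.integral_of_le hab,
    intervalIntegral.integral_eq_sub_of_hasDerivAt]
  · rwa [Set.uIcc_of_le hab]
  · rwa [intervalIntegrable_iff_integrableOn_Ioc_of_le hab]

lemma lintegral_Ioo_add_lintegral_Ioo_inv {m : ℝ} (hm : 0 < m) :
    (∫⁻ r in Set.Ioo 1 m, ENNReal.ofReal (r⁻¹ * (r - 1))) +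
      ∫⁻ r in Set.Ioo 1 m⁻¹, ENNReal.ofReal ((r ^ 2)⁻¹ * (r - 1)) =
    ENNReal.ofReal (m - 1 - Real.log m) := by
  rcases le_total 1 m with h | h
  · rw [Set.Ioo_eq_empty (b := m⁻¹) (not_lt.2 (inv_le_one_of_one_le₀ h)), setLIntegral_empty,
      add_zero, setLIntegral_Ioo_ofReal_of_hasDerivAt (F := fun r ↦ r - Real.log r) h]
    · simp only [Real.log_one]
      ring_nf
    · intro r hr
      have hr0 : r ≠ 0 := (one_pos.trans_le hr.1).ne'
      exact ((hasDerivAt_id' r).fun_sub (Real.hasDerivAt_log hr0)).congr_deriv (by field_simp)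
    · intro r hr
      exact mul_nonneg (inv_nonneg.2 (one_pos.trans hr.1).le) (sub_nonneg.2 hr.1.le)
  · rw [Set.Ioo_eq_empty (b := m) (not_lt.2 h), setLIntegral_empty, zero_add,
      setLIntegral_Ioo_ofReal_of_hasDerivAt (F := fun r ↦ Real.log r + r⁻¹)
        ((one_le_inv₀ hm).2 h)]
    · simp only [Real.log_inv, inv_inv, Real.log_one, inv_one]
      ring_nf
    · intro r hr
      have hr0 : r ≠ 0 := (one_pos.trans_le hr.1).ne'
      refine ((Real.hasDerivAt_log hr0).fun_add (hasDerivAt_inv hr0)).congr_deriv ?_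
      field_simp
      ring
    · intro r hr
      exact mul_nonneg (inv_nonneg.2 (sq_nonneg r)) (sub_nonneg.2 hr.1.le)

variable {n : ℕ} {A B : Matrix (Fin n) (Fin n) ℂ}

lemma ofReal_logDetDiv_eq_lintegral_posIndex (hA : A.PosDef) (hB : B.PosDef) :
    ENNReal.ofReal (logDetDiv A B) =
      (∫⁻ r in Set.Ioi (1 : ℝ), ENNReal.ofReal (r⁻¹ * (r - 1)) * posIndex (A - r • B)) +
      ∫⁻ r in Set.Ioi (1 : ℝ), ENNReal.ofReal ((r ^ 2)⁻¹ * (r - 1)) * posIndex (B - r • A) := by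
  obtain ⟨T, hT⟩ := exists_conjTranspose_mul_mul_eq_one hB
  have hpos := (posDef_conjTranspose_mul_mul hA hT).eigenvalues_pos
  set m := (isHermitian_conjTranspose_mul_mul T hA.1).eigenvalues
  have hAB : ∀ r : ℝ, posIndex (A - r • B) = Fintype.card {i // r < m i} := fun r ↦ by
    rw [show A - r • B = (1 : ℝ) • A + (-r) • B by module, posIndex_smul_add_smul hA.1 hB.1 hT]
    simp only [one_mul, ← sub_eq_add_neg, sub_pos, m]
  have hBA : ∀ r : ℝ, posIndex (B - r • A) = Fintype.card {i // r < (m i)⁻¹} := fun r ↦ by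
    rw [show B - r • A = (-r) • A + (1 : ℝ) • B by module, posIndex_smul_add_smul hA.1 hB.1 hT]
    simp only [neg_mul, neg_add_eq_sub, sub_pos, ← one_div, lt_div_iff₀ (hpos _), m]
  simp_rw [hAB, hBA]
  rw [lintegral_Ioi_mul_card_lt (by fun_prop), lintegral_Ioi_mul_card_lt (by fun_prop),
    ← Finset.sum_add_distrib, logDetDiv_eq_sum hA hB hT, ENNReal.ofReal_sum_of_nonneg]
  · exact Finset.sum_congr rfl fun i _ ↦ (lintegral_Ioo_add_lintegral_Ioo_inv (hpos i)).symm
  · exact fun i _ ↦ sub_nonneg.2 (Real.log_le_sub_one_of_pos (hpos i))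

lemma measurable_posIndex_pencil_shift (hA : A.IsHermitian) (hB : B.IsHermitian) :
    Measurable fun p : ℝ × ℝ ↦ posIndex (A + p.2 • 1 - p.1 • (B + p.2 • 1)) :=
  measurable_posIndex (by fun_prop) fun p ↦
    isHermitian_sub_smul (isHermitian_add_smul_one hA p.2) (isHermitian_add_smul_one hB p.2) p.1

lemma measurable_mul_posIndex_pencil_shift (hA : A.IsHermitian) (hB : B.IsHermitian) {k : ℝ → ℝ}
    (hk : Measurable k) : Measurable fun p : ℝ × ℝ ↦
      ENNReal.ofReal (k p.1 * (p.1 - 1)) * posIndex (A + p.2 • 1 - p.1 • (B + p.2 • 1)) := by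
  have := measurable_posIndex_pencil_shift hA hB
  fun_prop

lemma lintegral_mul_hockeyStick (hA : A.IsHermitian) (hB : B.IsHermitian) {k : ℝ → ℝ}
    (hk : Measurable k) (hk0 : ∀ r ∈ Set.Ioi 1, 0 ≤ k r) :
    ∫⁻ r in Set.Ioi (1 : ℝ), ENNReal.ofReal (k r * hockeyStick A B r) =
      ∫⁻ s in Set.Ioi (0 : ℝ), ∫⁻ r in Set.Ioi (1 : ℝ),
        ENNReal.ofReal (k r * (r - 1)) * posIndex (A + s • 1 - r • (B + s • 1)) := by
  rw [lintegral_lintegral_swap]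
  · refine setLIntegral_congr_fun measurableSet_Ioi fun r hr ↦ ?_
    have hr' : 0 < r - 1 := sub_pos.2 hr
    have hshift : ∀ s : ℝ, A + s • 1 - r • (B + s • 1) = A - r • B - ((r - 1) * s) • 1 :=
      fun s ↦ by module
    simp only [hockeyStick, hshift, ENNReal.ofReal_mul (hk0 r hr), mul_assoc]
    rw [lintegral_const_mul', lintegral_posIndex_sub_smul_one (isHermitian_sub_smul hA hB r) hr']
    exact ENNReal.ofReal_ne_top
  · exact ((measurable_mul_posIndex_pencil_shift hA hB hk).comp measurable_swap).aemeasurable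

lemma lintegral_logDetDiv_add_smul_one (hA : A.PosDef) (hB : B.PosDef) :
    ∫⁻ s in Set.Ioi (0 : ℝ), ENNReal.ofReal (logDetDiv (A + s • 1) (B + s • 1)) =
      (∫⁻ r in Set.Ioi (1 : ℝ), ENNReal.ofReal (r⁻¹ * hockeyStick A B r)) +
      ∫⁻ r in Set.Ioi (1 : ℝ), ENNReal.ofReal ((r ^ 2)⁻¹ * hockeyStick B A r) := by
  have hmeas : Measurable fun s : ℝ ↦ ∫⁻ r in Set.Ioi (1 : ℝ),
      ENNReal.ofReal (r⁻¹ * (r - 1)) * posIndex (A + s • 1 - r • (B + s • 1)) :=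
    (measurable_mul_posIndex_pencil_shift hA.1 hB.1 measurable_inv).lintegral_prod_left'
  rw [lintegral_mul_hockeyStick hA.1 hB.1 measurable_inv
      fun r hr ↦ inv_nonneg.2 (one_pos.trans hr).le,
    lintegral_mul_hockeyStick hB.1 hA.1 (k := fun r ↦ (r ^ 2)⁻¹) (by fun_prop)
      fun r _ ↦ inv_nonneg.2 (sq_nonneg r),
    ← lintegral_add_left hmeas]
  exact setLIntegral_congr_fun measurableSet_Ioi fun s hs ↦
    ofReal_logDetDiv_eq_lintegral_posIndex (posDef_add_smul_one hA (le_of_lt hs))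
      (posDef_add_smul_one hB (le_of_lt hs))

end InertiaIntegrals

section HockeyStick

variable {n : ℕ} {A B : Matrix (Fin n) (Fin n) ℂ}

lemma hockeyStick_nonneg (A B : Matrix (Fin n) (Fin n) ℂ) (γ : ℝ) : 0 ≤ hockeyStick A B γ :=
  (Complex.le_def.1 (posSemidef_mposPart _).trace_nonneg).1

lemma continuous_hockeyStick (hA : A.IsHermitian) (hB : B.IsHermitian) :
    Continuous (hockeyStick A B) :=
  continuous_re_trace_mposPart (by fun_prop) (isHermitian_sub_smul hA hB)

lemma hockeyStick_one_sub_hockeyStick_one (hA : A.IsHermitian) (hB : B.IsHermitian) :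
    hockeyStick A B 1 - hockeyStick B A 1 = (A - B).trace.re := by
  rw [hockeyStick, hockeyStick, one_smul, one_smul, ← neg_sub A B, ← Complex.sub_re, ← trace_sub,
    mposPart_sub_mposPart_neg (hA.sub hB)]

lemma re_trace_mul_projPos_sub_smul (hA : A.IsHermitian) (hB : B.IsHermitian) (γ : ℝ) :
    (A * projPos (A - γ • B)).trace.re =
      hockeyStick A B γ + γ * (B * projPos (A - γ • B)).trace.re := by
  rw [hockeyStick, ← mul_projPos (isHermitian_sub_smul hA hB γ), sub_mul, trace_sub, smul_mul_assoc,
    trace_smul, Complex.sub_re, Complex.smul_re, smul_eq_mul, sub_add_cancel]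

lemma hockeyStick_subgradient (hA : A.IsHermitian) (hB : B.IsHermitian) (x y : ℝ) :
    hockeyStick A B x + -(B * projPos (A - x • B)).trace.re * (y - x) ≤ hockeyStick A B y := by
  have h := re_trace_mposPart_add_le (isHermitian_sub_smul hA hB x)
    (hB.smul (IsSelfAdjoint.all (x - y)))
  rw [show A - x • B + (x - y) • B = A - y • B by module, smul_mul_assoc, trace_smul,
    Complex.smul_re, smul_eq_mul] at h
  rw [hockeyStick, hockeyStick]
  linarith

lemma eventually_projPos_sub_smul_eq_zero (hA : A.IsHermitian) (hB : B.PosDef) :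
    ∀ᶠ γ : ℝ in Filter.atTop, projPos (A - γ • B) = 0 := by
  obtain ⟨T, hT⟩ := exists_conjTranspose_mul_mul_eq_one hB
  have hbound : ∀ᶠ γ : ℝ in Filter.atTop,
      ∀ i, (isHermitian_conjTranspose_mul_mul T hA).eigenvalues i ≤ γ :=
    Filter.eventually_all.2 fun i ↦ Filter.eventually_ge_atTop _
  filter_upwards [hbound] with γ hγ
  refine projPos_eq_zero_of_posIndex ?_
  rw [show A - γ • B = (1 : ℝ) • A + (-γ) • B by module, posIndex_smul_add_smul hA hB.1 hT,
    Fintype.card_eq_zero_iff, isEmpty_subtype]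
  intro i
  linarith [hγ i]

lemma integral_Ioi_mul_re_trace_projPos_sub (hA : A.IsHermitian) (hB : B.PosDef) {k k' : ℝ → ℝ}
    {a : ℝ} (hk : ∀ γ ∈ Set.Ici a, HasDerivAt k (k' γ) γ) (hk' : ContinuousOn k' (Set.Ici a)) :
    IntegrableOn (fun γ ↦ k γ * (B * projPos (A - γ • B)).trace.re - k' γ * hockeyStick A B γ)
        (Set.Ioi a) ∧
      ∫ γ in Set.Ioi a, (k γ * (B * projPos (A - γ • B)).trace.re - k' γ * hockeyStick A B γ) =
        k a * hockeyStick A B a := by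
  have hproj := eventually_projPos_sub_smul_eq_zero hA hB
  have hf0 : ∀ᶠ γ : ℝ in Filter.atTop, hockeyStick A B γ = 0 := hproj.mono fun γ hγ ↦ by
    rw [hockeyStick, ← mul_projPos (isHermitian_sub_smul hA hB.1 γ), hγ, Matrix.mul_zero,
      trace_zero, Complex.zero_re]
  have hg0 : ∀ᶠ γ : ℝ in Filter.atTop, -(B * projPos (A - γ • B)).trace.re = 0 :=
    hproj.mono fun γ hγ ↦ by rw [hγ, Matrix.mul_zero, trace_zero, Complex.zero_re, neg_zero]
  obtain ⟨hint, hval⟩ := integral_Ioi_mul_add_mul_of_subgradient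
    (hockeyStick_subgradient hA hB.1) (k := fun γ ↦ -k γ) (fun γ hγ ↦ (hk γ hγ).fun_neg) hk'.neg
    hf0 hg0
  simp only [neg_mul, mul_neg, neg_neg, ← sub_eq_add_neg] at hint hval
  exact ⟨hint, hval⟩

lemma lintegral_hockeyStick_add_hockeyStick (hA : A.PosDef) (hB : B.PosDef) :
    ∫⁻ γ in Set.Ioi (1 : ℝ),
        ENNReal.ofReal (γ⁻¹ * hockeyStick A B γ + (γ ^ 2)⁻¹ * hockeyStick B A γ) =
      ENNReal.ofReal (relEntropy A B - (A - B).trace.re) := by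
  have hmeas : Measurable (hockeyStick A B) := (continuous_hockeyStick hA.1 hB.1).measurable
  obtain ⟨hint, hval⟩ := integral_logDetDiv_add_smul_one hA hB
  rw [RCLike.re_eq_complex_re] at hval
  rw [← hval, ofReal_integral_eq_lintegral_ofReal hint
      (ae_restrict_of_forall_mem measurableSet_Ioi (logDetDiv_add_smul_one_nonneg hA hB)),
    lintegral_logDetDiv_add_smul_one hA hB, ← lintegral_add_left (by fun_prop)]
  exact setLIntegral_congr_fun measurableSet_Ioi fun γ hγ ↦ ENNReal.ofReal_add
    (mul_nonneg (inv_nonneg.2 (one_pos.trans hγ).le) (hockeyStick_nonneg A B γ))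
    (mul_nonneg (inv_nonneg.2 (sq_nonneg γ)) (hockeyStick_nonneg B A γ))

lemma integral_hockeyStick_add_hockeyStick (hA : A.PosDef) (hB : B.PosDef) :
    IntegrableOn (fun γ ↦ γ⁻¹ * hockeyStick A B γ + (γ ^ 2)⁻¹ * hockeyStick B A γ) (Set.Ioi 1) ∧
      ∫ γ in Set.Ioi 1, (γ⁻¹ * hockeyStick A B γ + (γ ^ 2)⁻¹ * hockeyStick B A γ) =
        relEntropy A B - (A - B).trace.re := by
  have hmeas : Measurable fun γ ↦ γ⁻¹ * hockeyStick A B γ + (γ ^ 2)⁻¹ * hockeyStick B A γ := by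
    have hAB := (continuous_hockeyStick hA.1 hB.1).measurable
    have hBA := (continuous_hockeyStick hB.1 hA.1).measurable
    fun_prop
  have hnonneg : 0 ≤ᵐ[volume.restrict (Set.Ioi 1)]
      fun γ ↦ γ⁻¹ * hockeyStick A B γ + (γ ^ 2)⁻¹ * hockeyStick B A γ :=
    ae_restrict_of_forall_mem measurableSet_Ioi fun γ hγ ↦ add_nonneg
      (mul_nonneg (inv_nonneg.2 (one_pos.trans hγ).le) (hockeyStick_nonneg A B γ))
      (mul_nonneg (inv_nonneg.2 (sq_nonneg γ)) (hockeyStick_nonneg B A γ))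
  have hlint := lintegral_hockeyStick_add_hockeyStick hA hB
  refine ⟨⟨hmeas.aestronglyMeasurable, ?_⟩, ?_⟩
  · rw [hasFiniteIntegral_iff_ofReal hnonneg, hlint]
    exact ENNReal.ofReal_lt_top
  · rw [integral_eq_lintegral_of_nonneg_ae hnonneg hmeas.aestronglyMeasurable, hlint]
    exact ENNReal.toReal_ofReal (sub_nonneg.2 (re_trace_sub_le_relEntropy hA hB))

end HockeyStick

/-- the Umegaki relative entropy satisfies
`Tr[A(log A - log B)] = ∫₁^∞ (1/γ) Tr[A({A > γB} - {B > γA})] dγ`. -/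
theorem relativeEntropy_eq_integral_proj {n : ℕ} (A B : Matrix (Fin n) (Fin n) ℂ)
    (hA : A.PosDef) (hB : B.PosDef) :
    (Matrix.trace (A * (mlog A - mlog B))).re
      = ∫ γ in Set.Ioi (1:ℝ),
          γ⁻¹ * (Matrix.trace (A * (projPos (A - γ • B) - projPos (B - γ • A)))).re := by
  obtain ⟨hg, hg_eq⟩ := integral_Ioi_mul_re_trace_projPos_sub hA.1 hB
    (k := fun _ ↦ 1) (k' := fun _ ↦ 0) (a := 1) (fun γ _ ↦ hasDerivAt_const γ 1) continuousOn_const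
  obtain ⟨hg', hg'_eq⟩ := integral_Ioi_mul_re_trace_projPos_sub hB.1 hA (a := 1)
    (fun γ hγ ↦ hasDerivAt_inv (one_pos.trans_le hγ).ne')
    (ContinuousOn.neg (.inv₀ (by fun_prop) fun γ hγ ↦ (pow_pos (one_pos.trans_le hγ) 2).ne'))
  obtain ⟨hE, hE_eq⟩ := integral_hockeyStick_add_hockeyStick hA hB
  calc (A * (mlog A - mlog B)).trace.re = relEntropy A B := rfl
    _ = relEntropy A B - (A - B).trace.re + 1 * hockeyStick A B 1 - 1⁻¹ * hockeyStick B A 1 := by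
      rw [← hockeyStick_one_sub_hockeyStick_one hA.1 hB.1]
      ring
    _ = _ := by
      rw [← hE_eq, ← hg_eq, ← hg'_eq, ← integral_add hE hg, ← integral_sub (hE.fun_add hg) hg']
      refine setIntegral_congr_fun measurableSet_Ioi fun γ hγ ↦ ?_
      have hγ0 : γ ≠ 0 := (one_pos.trans hγ).ne'
      simp only [mul_sub, trace_sub, Complex.sub_re, re_trace_mul_projPos_sub_smul hA.1 hB.1]
      field_simp
      ring
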